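/- The set X = {x/√3 : x ∈ O16, ‖x‖² = 3} of normalized norm-3 vectors of the lattice O16 is a subset of the unit sphere of ℝ^16 with exactly 512 elements, and X is a spherical 5-design (so O16 is a strongly perfect lattice of minimum 3). -/

import Mathlib

noncomputable section

open scoped RealInnerProductSpace

/-- `ℝ^n` with the standard inner product. -/
abbrev E (n : ℕ) := EuclideanSpace ℝ (Fin n)

/-- The standard basis vector `ε i`. -/
def εv {n : ℕ} (i : Fin n) : E n := EuclideanSpace.single i 1

/-- The vector of `ℝ^n` with the given coordinates. -/
def vec {n : ℕ} (x : Fin n → ℝ) : E n := (WithLp.equiv 2 (Fin n → ℝ)).symm x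

/-- The vector of `ℝ^n` with the given integer coordinates. -/
def intVec {n : ℕ} (x : Fin n → ℤ) : E n := (WithLp.equiv 2 (Fin n → ℝ)).symm fun i => (x i : ℝ)

/-- A lattice is integral if all pairwise inner products of its elements are integers. -/
def LatticeIsIntegral {n : ℕ} (L : Submodule ℤ (E n)) : Prop :=
  ∀ x ∈ L, ∀ y ∈ L, ∃ k : ℤ, ⟪x, y⟫ = (k : ℝ)

/-- Two lattices are isometric if a linear isometry of the ambient space carries
one onto the other. -/
def IsometricLattices {n : ℕ} (L M : Submodule ℤ (E n)) : Prop :=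
  ∃ g : E n ≃ₗᵢ[ℝ] E n, g '' (L : Set (E n)) = (M : Set (E n))

def f0 : E 16 :=
  vec ![-1/2, 1/2, 1/2, 1/2, 1/2, 1/2, 1/2, 1/2, -1/2, 1/2, 1/2, 1/2, 1/2, 1/2, 1/2, 1/2]

def g1 : E 16 := εv 0 + εv 4 + εv 8 + εv 12
def g2 : E 16 := εv 0 + εv 2 + εv 4 + εv 6
def g3 : E 16 := εv 0 + εv 2 + εv 8 + εv 10
def g4 : E 16 := εv 0 + εv 2 + εv 12 + εv 14
def g5 : E 16 := εv 0 + εv 1 + εv 2 + εv 3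
def g6 : E 16 := εv 0 + εv 1 + εv 4 + εv 5
def g7 : E 16 := εv 0 + εv 1 + εv 6 + εv 7
def g8 : E 16 := εv 0 + εv 1 + εv 8 + εv 9
def g9 : E 16 := εv 0 + εv 1 + εv 10 + εv 11
def g10 : E 16 := εv 0 + εv 1 + εv 12 + εv 13
def g11 : E 16 := εv 0 + εv 1 + εv 14 + εv 15

/-- The Barnes-Wall lattice `BW₁₆ = ⟨2ε1, …, 2ε16, f0, g1, …, g11⟩`. -/
def BW16 : Submodule ℤ (E 16) :=
  Submodule.span ℤ ((Set.range fun i : Fin 16 => (2 : ℝ) • εv i) ∪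
    {f0, g1, g2, g3, g4, g5, g6, g7, g8, g9, g10, g11})

def f1 : E 16 := vec ![1/2, 1/2, 1/2, 1/2, 1/2, 1/2, 1/2, 1/2, 1, 0, 0, 0, 0, 0, 0, 0]

/-- `O₁₆ = ⟨2ε1, …, 2ε16, f0, f1, g1, …, g11⟩`. -/
def O16 : Submodule ℤ (E 16) := BW16 ⊔ Submodule.span ℤ {f1}

open MeasureTheory

/-- The uniform (rotation-invariant) probability measure on the unit sphere of `ℝ¹⁶`. -/
def sphereUniform : Measure (Metric.sphere (0 : E 16) 1) :=
  ((volume : Measure (E 16)).toSphere Set.univ)⁻¹ • (volume : Measure (E 16)).toSphere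

/-- `X` is a spherical `t`-design: for every polynomial of total degree at most `t`,
the average over `X` equals the average over the sphere with respect to the
rotation-invariant probability measure. -/
def IsSphericalDesign (X : Set (E 16)) (t : ℕ) : Prop :=
  ∀ p : MvPolynomial (Fin 16) ℝ, p.totalDegree ≤ t →
    (∑ᶠ x ∈ X, MvPolynomial.eval (fun i => x i) p) / (X.ncard : ℝ) =
      ∫ ξ, MvPolynomial.eval (fun i => (ξ : E 16) i) p ∂sphereUniform

/-- The set of normalized norm-3 vectors of `O₁₆`. -/
def X19 : Set (E 16) :=
  (fun x => (Real.sqrt 3)⁻¹ • x) '' {x ∈ (O16 : Set (E 16)) | ‖x‖ ^ 2 = 3}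

/-!
Venkov's criterion: a finite antipodal set of unit vectors whose fourth moments satisfy
`∑ ⟪x, v⟫ ^ 4 = C * ‖v‖ ^ 4` is a `5`-design. Indeed, powers of linear forms span the homogeneous
polynomials, so the fourth moments determine the mean of every quartic; multiplication by `∑ Xᵢ²`
reduces degrees `0` and `2` to degree `4`, and odd degrees vanish by symmetry.

Split `ℝ^16` as `ℝ^8 ⊕ ℝ^8`. The congruences defining `2 O16` show that a vector of norm `3` is,
up to exchanging the halves, `((s₀, …, s₇) / 2, ± eⱼ)` with signs `s` in the coset of the `[8, 4]`
Hamming code whose parity checks spell out `j`; this gives `2 · 8 · 16 · 2 = 512` vectors. The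
fourth moment follows from orthogonality of characters: products of two distinct signs have mean
zero on each coset, and on the union of the cosets, the even sign vectors, so do products of four
signs one of whose positions is isolated.
-/

/-! ### Venkov's criterion -/

namespace VenkovCriterion

open MvPolynomial

section Algebra

variable {σ K : Type*} [Fintype σ] [Field K]

/-- The linear form `∑ aᵢ Xᵢ`. -/
def linearForm (a : σ → K) : MvPolynomial σ K := ∑ i, C (a i) * X i

variable (σ K) in
/-- The quadratic form `∑ Xᵢ²`. -/
def normSq : MvPolynomial σ K := ∑ i, X i ^ 2

theorem normSq_isHomogeneous : (normSq σ K).IsHomogeneous 2 :=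
  IsHomogeneous.sum _ _ _ fun i _ => isHomogeneous_X_pow i 2

theorem linearForm_isHomogeneous (a : σ → K) : (linearForm a).IsHomogeneous 1 :=
  IsHomogeneous.sum _ _ _ fun i _ => isHomogeneous_C_mul_X (a i) i

theorem coeff_linearForm_pow (a : σ → K) (m : σ →₀ ℕ) :
    coeff m (linearForm a ^ m.degree) = m.multinomial * m.prod fun i k => a i ^ k := by
  have h := coeff_linearCombination_X_pow_of_fintype a m m.degree
  simpa [linearForm, smul_eq_C_mul, Finsupp.degree_eq_sum, Finsupp.sum_fintype] using h

theorem mem_finsuppAntidiag_univ [DecidableEq σ] {m : σ →₀ ℕ} {d : ℕ} :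
    m ∈ Finset.univ.finsuppAntidiag d ↔ m.degree = d := by
  simp [Finsupp.degree_eq_sum]

theorem linearForm_pow_eq_sum [DecidableEq σ] (a : σ → K) (d : ℕ) :
    linearForm a ^ d =
      ∑ m ∈ Finset.univ.finsuppAntidiag d,
        (m.multinomial * m.prod fun i k => a i ^ k) • monomial m (1 : K) := by
  have hpow : (linearForm a ^ d).IsHomogeneous d := by
    simpa using (linearForm_isHomogeneous a).pow d
  have hsupp : (linearForm a ^ d).support ⊆ Finset.univ.finsuppAntidiag d := fun m hm =>
    mem_finsuppAntidiag_univ.mpr (hpow.degree_eq_sum_deg_support hm).symm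
  conv_lhs => rw [as_sum (linearForm a ^ d)]
  rw [Finset.sum_subset hsupp fun m _ hm => by rw [notMem_support_iff.mp hm, monomial_zero]]
  refine Finset.sum_congr rfl fun m hm => ?_
  rw [← coeff_linearForm_pow, mem_finsuppAntidiag_univ.mp hm, smul_monomial, smul_eq_mul, mul_one]

variable [CharZero K]

-- The value of `T` at `(∑ aᵢ Xᵢ) ^ d` is a polynomial in `a` whose coefficients are, up to
-- multinomial factors, the values of `T` at the monomials of degree `d`.
theorem map_eq_zero_of_map_linearForm_pow_eq_zero {T : MvPolynomial σ K →ₗ[K] K} {d : ℕ}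
    (hT : ∀ a, T (linearForm a ^ d) = 0) {p : MvPolynomial σ K} (hp : p.IsHomogeneous d) :
    T p = 0 := by
  classical
  set Q : MvPolynomial σ K := ∑ m ∈ Finset.univ.finsuppAntidiag d,
    monomial m (m.multinomial * T (monomial m 1)) with hQ
  have hQ_eval : ∀ a, eval a Q = 0 := fun a => by
    rw [← hT a, linearForm_pow_eq_sum, hQ, map_sum, map_sum]
    refine Finset.sum_congr rfl fun m _ => ?_
    rw [eval_monomial, map_smul, smul_eq_mul]
    ring
  have hQ_zero : Q = 0 := MvPolynomial.funext fun a => by rw [hQ_eval, map_zero]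
  have hmon : ∀ m ∈ Finset.univ.finsuppAntidiag d, T (monomial m 1) = 0 := fun m hm => by
    have hcoeff : coeff m Q = m.multinomial * T (monomial m 1) := by
      simp only [hQ, coeff_sum, coeff_monomial, Finset.sum_ite_eq', hm, if_true]
    rw [hQ_zero, coeff_zero, zero_eq_mul, Nat.cast_eq_zero] at hcoeff
    exact hcoeff.resolve_left (Nat.multinomial_pos _ _).ne'
  rw [as_sum p, map_sum]
  refine Finset.sum_eq_zero fun m hm => ?_
  rw [← mul_one (coeff m p), ← smul_eq_mul, ← smul_monomial, map_smul, hmon m, smul_zero]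
  exact mem_finsuppAntidiag_univ.mpr (hp.degree_eq_sum_deg_support hm).symm

/-- A linear functional on polynomials that behaves like the mean over a centrally symmetric
set of unit vectors all of whose `2s`-th moments `L ((∑ aᵢ Xᵢ) ^ (2s))` depend only on
`∑ aᵢ²`, with constant `c`. -/
structure IsIsotropicMean (L : MvPolynomial σ K →ₗ[K] K) (s : ℕ) (c : K) : Prop where
  map_one : L 1 = 1
  map_normSq_mul : ∀ p, L (normSq σ K * p) = L p
  map_odd : ∀ {d p}, Odd d → p.IsHomogeneous d → L p = 0
  map_linearForm_pow : ∀ a, L (linearForm a ^ (2 * s)) = c * (∑ i, a i ^ 2) ^ s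

namespace IsIsotropicMean

variable {L L' : MvPolynomial σ K →ₗ[K] K} {s : ℕ} {c c' : K}

omit [CharZero K] in
theorem map_normSq_pow_mul (h : IsIsotropicMean L s c) (k : ℕ) (p : MvPolynomial σ K) :
    L (normSq σ K ^ k * p) = L p := by
  induction k with
  | zero => rw [pow_zero, one_mul]
  | succ k ih => rw [pow_succ', mul_assoc, h.map_normSq_mul, ih]

omit [CharZero K] in
theorem map_normSq_pow (h : IsIsotropicMean L s c) (k : ℕ) : L (normSq σ K ^ k) = 1 := by
  rw [← mul_one (normSq σ K ^ k), h.map_normSq_pow_mul, h.map_one]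

-- `c' • L - c • L'` kills all `2s`-th powers of linear forms, hence the form `(∑ Xᵢ²) ^ s`.
theorem constant_unique (h : IsIsotropicMean L s c) (h' : IsIsotropicMean L' s c') : c = c' := by
  have hT : ∀ a, (c' • L - c • L') (linearForm a ^ (2 * s)) = 0 := fun a => by
    simp only [LinearMap.sub_apply, LinearMap.smul_apply, h.map_linearForm_pow,
      h'.map_linearForm_pow, smul_eq_mul]
    ring
  have := map_eq_zero_of_map_linearForm_pow_eq_zero hT (normSq_isHomogeneous.pow s)
  simp only [LinearMap.sub_apply, LinearMap.smul_apply, h.map_normSq_pow, h'.map_normSq_pow,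
    smul_eq_mul, mul_one] at this
  exact (sub_eq_zero.mp this).symm

theorem eq_of_isHomogeneous (h : IsIsotropicMean L s c) (h' : IsIsotropicMean L' s c')
    {d : ℕ} (hd : d ≤ 2 * s + 1) {p : MvPolynomial σ K} (hp : p.IsHomogeneous d) :
    L p = L' p := by
  obtain heven | hodd := d.even_or_odd
  · obtain ⟨k, rfl⟩ := heven.exists_two_nsmul
    have hT : ∀ a, (L - L') (linearForm a ^ (2 * s)) = 0 := fun a => by
      rw [LinearMap.sub_apply, h.map_linearForm_pow, h'.map_linearForm_pow,
        h.constant_unique h', sub_self]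
    have hdeg : (normSq σ K ^ (s - k) * p).IsHomogeneous (2 * s) := by
      convert (normSq_isHomogeneous.pow (s - k)).mul hp using 1
      rw [smul_eq_mul] at hd ⊢
      lia
    rw [← h.map_normSq_pow_mul (s - k), ← h'.map_normSq_pow_mul (s - k), ← sub_eq_zero,
      ← LinearMap.sub_apply, map_eq_zero_of_map_linearForm_pow_eq_zero hT hdeg]
  · rw [h.map_odd hodd hp, h'.map_odd hodd hp]

theorem eq_of_totalDegree_le (h : IsIsotropicMean L s c) (h' : IsIsotropicMean L' s c')
    {p : MvPolynomial σ K} (hp : p.totalDegree ≤ 2 * s + 1) : L p = L' p := by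
  rw [← sum_homogeneousComponent p, map_sum, map_sum]
  refine Finset.sum_congr rfl fun d hd => ?_
  exact h.eq_of_isHomogeneous h' (by grind) (homogeneousComponent_isHomogeneous d p)

end IsIsotropicMean

end Algebra

section Sphere

open Metric
open scoped Pointwise

variable {F : Type*} [NormedAddCommGroup F] [InnerProductSpace ℝ F]

/-- The action of a linear isometry on the unit sphere. -/
def sphereHomeomorph (g : F ≃ₗᵢ[ℝ] F) : sphere (0 : F) 1 ≃ₜ sphere (0 : F) 1 :=
  g.toHomeomorph.subtype fun x => by simp

@[simp]
theorem coe_sphereHomeomorph (g : F ≃ₗᵢ[ℝ] F) (ξ : sphere (0 : F) 1) :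
    (sphereHomeomorph g ξ : F) = g ξ := rfl

theorem smul_image_preimage_sphereHomeomorph (g : F ≃ₗᵢ[ℝ] F) (I : Set ℝ)
    (s : Set (sphere (0 : F) 1)) :
    I • (Subtype.val '' (sphereHomeomorph g ⁻¹' s)) = g ⁻¹' (I • (Subtype.val '' s)) := by
  ext x
  simp only [Set.mem_smul, Set.mem_image, Set.mem_preimage]
  constructor
  · rintro ⟨r, hr, _, ⟨ξ, hξ, rfl⟩, rfl⟩
    exact ⟨r, hr, _, ⟨_, hξ, rfl⟩, (map_smul g r _).symm⟩
  · rintro ⟨r, hr, _, ⟨ξ, hξ, rfl⟩, hx⟩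
    refine ⟨r, hr, _, ⟨(sphereHomeomorph g).symm ξ, by simpa using hξ, rfl⟩, g.injective ?_⟩
    rw [map_smul, ← coe_sphereHomeomorph, Homeomorph.apply_symm_apply, hx]

variable [MeasurableSpace F] [BorelSpace F]

/-- A measure on the unit sphere is rotation invariant if all linear isometries preserve it. -/
def IsRotationInvariant (ν : Measure (sphere (0 : F) 1)) : Prop :=
  ∀ g : F ≃ₗᵢ[ℝ] F, MeasurePreserving (sphereHomeomorph g) ν ν

theorem isRotationInvariant_toSphere [FiniteDimensional ℝ F] :
    IsRotationInvariant (volume : Measure F).toSphere := fun g => by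
  refine ⟨(sphereHomeomorph g).continuous.measurable, Measure.ext fun s hs => ?_⟩
  have hm := (sphereHomeomorph g).continuous.measurable
  rw [Measure.map_apply hm hs, Measure.toSphere_apply' _ (hm hs), Measure.toSphere_apply' _ hs,
    smul_image_preimage_sphereHomeomorph, g.measurePreserving.measure_preimage_emb
      g.toHomeomorph.measurableEmbedding]

omit [BorelSpace F] in
theorem IsRotationInvariant.smul {ν : Measure (sphere (0 : F) 1)} (hν : IsRotationInvariant ν)
    (c : ENNReal) : IsRotationInvariant (c • ν) :=
  fun g => (hν g).smul_measure c

namespace IsRotationInvariant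

variable {ν : Measure (sphere (0 : F) 1)}

theorem integral_comp (hν : IsRotationInvariant ν) (g : F ≃ₗᵢ[ℝ] F) (f : F → ℝ) :
    ∫ ξ, f (g ξ) ∂ν = ∫ ξ, f ξ ∂ν :=
  (hν g).integral_comp (sphereHomeomorph g).measurableEmbedding fun ξ => f ξ

theorem integral_inner_pow_congr (hν : IsRotationInvariant ν) {v w : F}
    (h : ‖v‖ = ‖w‖) (k : ℕ) : ∫ ξ, ⟪(ξ : F), v⟫ ^ k ∂ν = ∫ ξ, ⟪(ξ : F), w⟫ ^ k ∂ν := by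
  set g := (ℝ ∙ (v - w))ᗮ.reflection
  rw [← hν.integral_comp g fun x => ⟪x, w⟫ ^ k]
  have hg : g v = w := Submodule.reflection_sub h
  simp only [← hg, g.inner_map_map]

theorem integral_inner_pow (hν : IsRotationInvariant ν)
    (e : sphere (0 : F) 1) (v : F) (k : ℕ) :
    ∫ ξ, ⟪(ξ : F), v⟫ ^ k ∂ν = (∫ ξ, ⟪(ξ : F), e⟫ ^ k ∂ν) * ‖v‖ ^ k := by
  have hnorm : ‖v‖ = ‖‖v‖ • (e : F)‖ := by
    rw [norm_smul, norm_norm, norm_eq_of_mem_sphere, mul_one]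
  rw [hν.integral_inner_pow_congr hnorm, ← integral_mul_const]
  simp only [inner_smul_right, mul_pow, mul_comm]

end IsRotationInvariant

end Sphere

section Evaluation

variable {ι : Type*} [Fintype ι]

theorem eval_linearForm (x : EuclideanSpace ℝ ι) (a : ι → ℝ) :
    eval (fun i => x i) (linearForm a) = ⟪x, WithLp.toLp 2 a⟫ := by
  simp [linearForm, PiLp.inner_apply]

theorem eval_normSq (x : EuclideanSpace ℝ ι) : eval (fun i => x i) (normSq ι ℝ) = ‖x‖ ^ 2 := by
  simp [normSq, EuclideanSpace.real_norm_sq_eq]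

omit [Fintype ι] in
theorem eval_neg_of_odd {p : MvPolynomial ι ℝ} {d : ℕ} (hd : Odd d) (hp : p.IsHomogeneous d)
    (x : EuclideanSpace ℝ ι) : eval (fun i => (-x) i) p = -eval (fun i => x i) p := by
  rw [eval_eq, eval_eq, ← Finset.sum_neg_distrib]
  refine Finset.sum_congr rfl fun m hm => ?_
  simp only [PiLp.neg_apply, ← neg_one_mul (x _), mul_pow, Finset.prod_mul_distrib,
    Finset.prod_pow_eq_pow_sum, ← hp.degree_eq_sum_deg_support hm, hd.neg_one_pow]
  ring

end Evaluation

instance : IsProbabilityMeasure sphereUniform :=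
  have : NeZero (volume : Measure (E 16)).toSphere := ⟨Measure.toSphere_ne_zero _⟩
  isProbabilityMeasureSMul

theorem isRotationInvariant_sphereUniform : IsRotationInvariant sphereUniform :=
  isRotationInvariant_toSphere.smul _

section Mean

variable {ι : Type*} [Fintype ι]

theorem integrable_eval (ν : Measure (Metric.sphere (0 : EuclideanSpace ℝ ι) 1))
    [IsFiniteMeasure ν] (p : MvPolynomial ι ℝ) :
    Integrable (fun ξ : Metric.sphere (0 : EuclideanSpace ℝ ι) 1 => eval (fun i => ξ.1 i) p) ν :=
  Continuous.integrable_of_hasCompactSupport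
    ((continuous_eval p).comp (by fun_prop)) (.of_compactSpace _)

/-- The mean value of a polynomial function with respect to a measure on the unit sphere. -/
def sphereMean (ν : Measure (Metric.sphere (0 : EuclideanSpace ℝ ι) 1)) [IsFiniteMeasure ν] :
    MvPolynomial ι ℝ →ₗ[ℝ] ℝ where
  toFun p := ∫ ξ, eval (fun i => (ξ : EuclideanSpace ℝ ι) i) p ∂ν
  map_add' p q := by
    simp only [map_add]
    exact integral_add (integrable_eval ν p) (integrable_eval ν q)
  map_smul' r p := by
    simp only [smul_eval, RingHom.id_apply, smul_eq_mul, integral_const_mul]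

theorem isIsotropicMean_sphereMean {ν : Measure (Metric.sphere (0 : EuclideanSpace ℝ ι) 1)}
    [IsProbabilityMeasure ν] (hν : IsRotationInvariant ν) (s : ℕ) :
    ∃ c, IsIsotropicMean (sphereMean ν) s c := by
  obtain ⟨e⟩ := nonempty_of_isProbabilityMeasure ν
  refine ⟨∫ ξ, ⟪(ξ : EuclideanSpace ℝ ι), e⟫ ^ (2 * s) ∂ν, ?_, fun p => ?_,
    fun {d p} hd hp => ?_, fun a => ?_⟩
  · simp [sphereMean]
  · simp [sphereMean, eval_normSq]
  · have h := hν.integral_comp (.neg ℝ) fun x => eval (fun i => x i) p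
    simp only [LinearIsometryEquiv.coe_neg, eval_neg_of_odd hd hp, integral_neg] at h
    exact self_eq_neg.mp h.symm
  · have h := hν.integral_inner_pow e (WithLp.toLp 2 a) (2 * s)
    simpa [sphereMean, eval_linearForm, pow_mul, EuclideanSpace.real_norm_sq_eq] using h

/-- The mean value of a polynomial function over a finite set of points. -/
def finsetMean (Y : Finset (EuclideanSpace ℝ ι)) : MvPolynomial ι ℝ →ₗ[ℝ] ℝ :=
  (Y.card : ℝ)⁻¹ • ∑ x ∈ Y, (aeval fun i => x i).toLinearMap

omit [Fintype ι] in
theorem finsetMean_apply (Y : Finset (EuclideanSpace ℝ ι)) (p : MvPolynomial ι ℝ) :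
    finsetMean Y p = (∑ x ∈ Y, eval (fun i => x i) p) / Y.card := by
  simp [finsetMean, div_eq_inv_mul]

theorem isIsotropicMean_finsetMean {Y : Finset (EuclideanSpace ℝ ι)} (hne : Y.Nonempty)
    (hsphere : ∀ x ∈ Y, ‖x‖ = 1) (hneg : ∀ x ∈ Y, -x ∈ Y) {s : ℕ} {C : ℝ}
    (hC : ∀ v, ∑ x ∈ Y, ⟪x, v⟫ ^ (2 * s) = C * ‖v‖ ^ (2 * s)) :
    IsIsotropicMean (finsetMean Y) s (C / Y.card) where
  map_one := by simp [finsetMean_apply, hne.card_ne_zero]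
  map_normSq_mul p := by
    rw [finsetMean_apply, finsetMean_apply]
    congr 1
    refine Finset.sum_congr rfl fun x hx => ?_
    rw [map_mul, eval_normSq, hsphere x hx, one_pow, one_mul]
  map_odd {d p} hd hp := by
    have h : ∑ x ∈ Y, eval (fun i => x i) p = ∑ x ∈ Y, -eval (fun i => x i) p :=
      Finset.sum_nbij' (-·) (-·) hneg hneg (fun x _ => neg_neg x) (fun x _ => neg_neg x)
        fun x _ => by rw [eval_neg_of_odd hd hp, neg_neg]
    rw [Finset.sum_neg_distrib, self_eq_neg] at h
    rw [finsetMean_apply, h, zero_div]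
  map_linearForm_pow a := by
    have h := hC (WithLp.toLp 2 a)
    simp only [pow_mul, EuclideanSpace.real_norm_sq_eq] at h
    simp only [finsetMean_apply, map_pow, eval_linearForm, pow_mul, h]
    ring

end Mean

theorem isSphericalDesign_of_sum_inner_pow {Y : Finset (E 16)} (hne : Y.Nonempty)
    (hsphere : ∀ x ∈ Y, ‖x‖ = 1) (hneg : ∀ x ∈ Y, -x ∈ Y) {s : ℕ} {C : ℝ}
    (hC : ∀ v, ∑ x ∈ Y, ⟪x, v⟫ ^ (2 * s) = C * ‖v‖ ^ (2 * s)) :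
    IsSphericalDesign Y (2 * s + 1) := fun p hp => by
  obtain ⟨c, hc⟩ := isIsotropicMean_sphereMean isRotationInvariant_sphereUniform s
  rw [finsum_mem_coe_finset, Set.ncard_coe_finset, ← finsetMean_apply]
  exact (isIsotropicMean_finsetMean hne hsphere hneg hC).eq_of_totalDegree_le hc hp

end VenkovCriterion

open VenkovCriterion

/-! ### Moments of sign vectors -/

section SignVectors

-- Multiplication by `h` permutes `S` and reverses the sign of `χ`.
theorem sum_character_eq_zero {G : Type*} [Group G] {S : Finset G} (χ : G →* ℤˣ) {h : G}
    (hS : ∀ s ∈ S, h * s ∈ S) (hχ : χ h = -1) : ∑ s ∈ S, (χ s : ℝ) = 0 := by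
  have hperm : S.map (mulLeftEmbedding h) = S :=
    Finset.eq_of_subset_of_card_le (fun t ht => by
      obtain ⟨s, hs, rfl⟩ := Finset.mem_map.mp ht
      exact hS s hs) (Finset.card_map _).ge
  refine self_eq_neg.mp ?_
  conv_lhs => rw [← hperm, Finset.sum_map]
  simp [hχ]

variable {ι : Type*} [Fintype ι]

/-- The inner product of a sign vector and a real vector. -/
def signDot (s : ι → ℤˣ) (a : ι → ℝ) : ℝ := ∑ i, (s i : ℝ) * a i

theorem signDot_sq (s : ι → ℤˣ) (a : ι → ℝ) :
    signDot s a ^ 2 = ∑ i, ∑ j, a i * a j * (s i * s j : ℤˣ) := by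
  rw [signDot, sq, Finset.sum_mul_sum]
  refine Finset.sum_congr rfl fun i _ => Finset.sum_congr rfl fun j _ => ?_
  push_cast
  ring

theorem signDot_pow_four (s : ι → ℤˣ) (a : ι → ℝ) :
    signDot s a ^ 4 =
      ∑ i, ∑ j, ∑ k, ∑ l, a i * a j * (a k * a l) * (s i * s j * (s k * s l) : ℤˣ) := by
  rw [show 4 = 2 + 2 from rfl, pow_add, signDot_sq]
  simp only [Finset.sum_mul, Finset.mul_sum]
  refine Finset.sum_congr rfl fun i _ => Finset.sum_congr rfl fun j _ =>
    Finset.sum_congr rfl fun k _ => Finset.sum_congr rfl fun l _ => ?_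
  push_cast
  ring

variable {S : Finset (ι → ℤˣ)}

omit [Fintype ι] in
theorem sum_two_signs [DecidableEq ι]
    (hS : ∀ i j, i ≠ j → ∑ s ∈ S, ((s i * s j : ℤˣ) : ℝ) = 0) (i j : ι) :
    ∑ s ∈ S, ((s i * s j : ℤˣ) : ℝ) = S.card * if i = j then 1 else 0 := by
  split_ifs with h
  · simp [h]
  · rw [hS i j h, mul_zero]

theorem sum_signDot_sq (hS : ∀ i j, i ≠ j → ∑ s ∈ S, ((s i * s j : ℤˣ) : ℝ) = 0) (a : ι → ℝ) :
    ∑ s ∈ S, signDot s a ^ 2 = S.card * ∑ i, a i ^ 2 := by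
  classical
  calc ∑ s ∈ S, signDot s a ^ 2
      = ∑ i, ∑ j, a i * a j * ∑ s ∈ S, ((s i * s j : ℤˣ) : ℝ) := by
        simp only [signDot_sq, Finset.mul_sum]
        rw [Finset.sum_comm]
        exact Finset.sum_congr rfl fun i _ => Finset.sum_comm
    _ = S.card * ∑ i, a i ^ 2 := by
        simp only [sum_two_signs hS, mul_ite, mul_one, mul_zero, Finset.sum_ite_eq,
          Finset.mem_univ, if_true, Finset.mul_sum]
        exact Finset.sum_congr rfl fun i _ => by ring

omit [Fintype ι] in
theorem sum_four_signs [DecidableEq ι]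
    (hS : ∀ i j k l, i ≠ j → i ≠ k → i ≠ l →
      ∑ s ∈ S, ((s i * s j * (s k * s l) : ℤˣ) : ℝ) = 0) (i j k l : ι) :
    ∑ s ∈ S, ((s i * s j * (s k * s l) : ℤˣ) : ℝ) =
      S.card * ((if i = j then 1 else 0) * (if k = l then 1 else 0)
        + (if i = k then 1 else 0) * (if j = l then 1 else 0)
        + (if i = l then 1 else 0) * (if j = k then 1 else 0)
        - 2 * ((if i = j then 1 else 0) * (if i = k then 1 else 0) * if i = l then 1 else 0)) := by
  have hpair := sum_two_signs fun i j h => by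
    simpa only [Int.units_mul_self, mul_one] using hS i j j j h h h
  rcases eq_or_ne i j with rfl | hij
  · simp only [Int.units_mul_self, one_mul, hpair, if_true]
    ring
  rcases eq_or_ne i k with rfl | hik
  · simp only [mul_mul_mul_comm (_ : ℤˣ), Int.units_mul_self, one_mul, hpair, if_true,
      if_neg hij, if_neg hij.symm]
    ring
  rcases eq_or_ne i l with rfl | hil
  · have hprod : ∀ s : ι → ℤˣ, s i * s j * (s k * s i) = s j * s k := fun s => by
      rw [mul_comm (s k), mul_mul_mul_comm, Int.units_mul_self, one_mul]
    simp only [hprod, hpair, if_true, if_neg hij, if_neg hik]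
    ring
  · simp only [hS i j k l hij hik hil, if_neg hij, if_neg hik, if_neg hil]
    ring

theorem sum_signDot_pow_four
    (hS : ∀ i j k l, i ≠ j → i ≠ k → i ≠ l →
      ∑ s ∈ S, ((s i * s j * (s k * s l) : ℤˣ) : ℝ) = 0) (a : ι → ℝ) :
    ∑ s ∈ S, signDot s a ^ 4 = S.card * (3 * (∑ i, a i ^ 2) ^ 2 - 2 * ∑ i, a i ^ 4) := by
  classical
  calc ∑ s ∈ S, signDot s a ^ 4
      = ∑ i, ∑ j, ∑ k, ∑ l, a i * a j * (a k * a l) *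
          ∑ s ∈ S, ((s i * s j * (s k * s l) : ℤˣ) : ℝ) := by
        simp only [signDot_pow_four, Finset.mul_sum]
        simp only [Finset.sum_comm (s := S)]
    _ = S.card * (3 * (∑ i, a i ^ 2) ^ 2 - 2 * ∑ i, a i ^ 4) := by
        simp only [sum_four_signs hS, mul_sub, mul_add, Finset.sum_add_distrib,
          Finset.sum_sub_distrib, mul_ite, mul_one, mul_zero, Finset.sum_ite_eq, Finset.mem_univ,
          if_true, Finset.sum_ite_irrel, Finset.sum_const_zero]
        rw [sq (∑ i, a i ^ 2), Finset.sum_mul_sum]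
        simp only [Finset.mul_sum, ← Finset.sum_add_distrib]
        congr 1
        · exact Finset.sum_congr rfl fun i _ => Finset.sum_congr rfl fun j _ => by ring
        · exact Finset.sum_congr rfl fun i _ => by ring

end SignVectors

section SignClasses

/-- The binary digits of `j < 8`, written as signs: `-1` encodes the digit `1`. -/
def bitSign (j : Fin 8) (k : Fin 3) : ℤˣ := if (j : ℕ).testBit k then -1 else 1

/-- The parity checks of the `[8, 4]` Hamming code other than the total parity: the product of the
signs at the positions whose `k`-th binary digit is `1`. -/
def checkSign (s : Fin 8 → ℤˣ) (k : Fin 3) : ℤˣ := ∏ i with bitSign i k = -1, s i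

/-- The sign vectors of length `8` with an even number of minus signs. -/
def evenSigns : Finset (Fin 8 → ℤˣ) := {s | ∏ i, s i = 1}

/-- The coset of the `[8, 4]` Hamming code, written multiplicatively in the even sign vectors, whose
parity checks spell out `j` in binary. -/
def signClass (j : Fin 8) : Finset (Fin 8 → ℤˣ) := {s ∈ evenSigns | checkSign s = bitSign j}

theorem checkSign_mul (s t : Fin 8 → ℤˣ) : checkSign (s * t) = checkSign s * checkSign t :=
  funext fun _ => Finset.prod_mul_distrib

theorem mul_mem_evenSigns {s t : Fin 8 → ℤˣ} (hs : s ∈ evenSigns) (ht : t ∈ evenSigns) :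
    s * t ∈ evenSigns := by
  simp only [evenSigns, Finset.mem_filter_univ] at hs ht ⊢
  simp only [Pi.mul_apply, Finset.prod_mul_distrib, hs, ht, mul_one]

theorem card_evenSigns : evenSigns.card = 128 := by decide +kernel

theorem card_signClass (j : Fin 8) : (signClass j).card = 16 := by
  revert j
  decide +kernel

theorem bitSign_bijective : Function.Bijective bitSign := by decide +kernel

theorem sum_signClass (f : (Fin 8 → ℤˣ) → ℝ) :
    ∑ j, ∑ s ∈ signClass j, f s = ∑ s ∈ evenSigns, f s := by
  rw [← Finset.sum_fiberwise evenSigns checkSign f]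
  exact bitSign_bijective.sum_comp fun c => ∑ s ∈ evenSigns with checkSign s = c, f s

theorem bitSign_mul_mem_signClass (k : Fin 3) {j : Fin 8} {s : Fin 8 → ℤˣ}
    (hs : s ∈ signClass j) : (bitSign · k) * s ∈ signClass j := by
  have hcode : ∀ k, (bitSign · k) ∈ evenSigns ∧ checkSign (bitSign · k) = 1 := by decide +kernel
  obtain ⟨heven, hcheck⟩ := Finset.mem_filter.mp hs
  refine Finset.mem_filter.mpr ⟨mul_mem_evenSigns (hcode k).1 heven, ?_⟩
  rw [checkSign_mul, (hcode k).2, hcheck, one_mul]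

-- Distinct positions differ in some binary digit `k`; multiply by the codeword of this digit.
theorem sum_signClass_mul_eq_zero (j : Fin 8) {i i' : Fin 8} (h : i ≠ i') :
    ∑ s ∈ signClass j, ((s i * s i' : ℤˣ) : ℝ) = 0 := by
  have hsep : ∀ i i', i ≠ i' → ∃ k, bitSign i k * bitSign i' k = -1 := by decide +kernel
  obtain ⟨k, hk⟩ := hsep i i' h
  let ev := Pi.evalMonoidHom fun _ : Fin 8 => ℤˣ
  exact sum_character_eq_zero (ev i * ev i') (fun s hs => bitSign_mul_mem_signClass k hs) hk

-- Flip the isolated position `i` together with a fifth position.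
theorem sum_evenSigns_mul_eq_zero {i j k l : Fin 8} (hij : i ≠ j) (hik : i ≠ k) (hil : i ≠ l) :
    ∑ s ∈ evenSigns, ((s i * s j * (s k * s l) : ℤˣ) : ℝ) = 0 := by
  obtain ⟨m, hm⟩ : ∃ m, m ∉ ({i, j, k, l} : Finset (Fin 8)) :=
    Finset.exists_mem_notMem_of_card_lt_card (s := {i, j, k, l}) (t := Finset.univ)
      ((Finset.card_le_four).trans_lt (by simp)) |>.imp fun _ h => h.2
  simp only [Finset.mem_insert, Finset.mem_singleton, not_or] at hm
  obtain ⟨hmi, hmj, hmk, hml⟩ := hm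
  set flip : Fin 8 → ℤˣ := Pi.mulSingle i (-1) * Pi.mulSingle m (-1) with hflip
  have heven : flip ∈ evenSigns := by
    simp [evenSigns, hflip, Finset.prod_mul_distrib]
  have hflip_other : ∀ n, n ≠ i → n ≠ m → flip n = 1 := fun n hi hm => by
    simp [hflip, hi, hm]
  let ev := Pi.evalMonoidHom fun _ : Fin 8 => ℤˣ
  refine sum_character_eq_zero (ev i * ev j * (ev k * ev l))
    (fun s hs => mul_mem_evenSigns heven hs) ?_
  change flip i * flip j * (flip k * flip l) = -1
  rw [hflip_other j hij.symm (Ne.symm hmj), hflip_other k hik.symm (Ne.symm hmk),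
    hflip_other l hil.symm (Ne.symm hml)]
  simp [hflip, Ne.symm hmi]

end SignClasses

/-! ### The shell and its fourth moment -/

section Halving

/-- A pair of integer vectors of length `8`, standing for twice the coordinates of a vector of
`O16`. -/
abbrev DoubledVec := (Fin 8 → ℤ) × (Fin 8 → ℤ)

/-- The vector of `ℝ^16` whose doubled coordinates are given. -/
def halve : DoubledVec →ₗ[ℤ] E 16 where
  toFun z := (2⁻¹ : ℝ) • intVec (Fin.append z.1 z.2)
  map_add' z w := by
    ext i
    induction i using Fin.addCases (m := 8) (n := 8) <;>
      simp [intVec, mul_add, -Fin.natAdd_eq_addNat]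
  map_smul' n z := by
    ext i
    induction i using Fin.addCases (m := 8) (n := 8) <;>
      simp [intVec, mul_left_comm, -Fin.natAdd_eq_addNat]

@[simp]
theorem halve_castAdd (z : DoubledVec) (i : Fin 8) : halve z (Fin.castAdd 8 i) = z.1 i / 2 := by
  simp [halve, intVec, div_eq_inv_mul]

@[simp]
theorem halve_natAdd (z : DoubledVec) (i : Fin 8) : halve z (Fin.natAdd 8 i) = z.2 i / 2 := by
  simp [halve, intVec, div_eq_inv_mul, -Fin.natAdd_eq_addNat]

theorem ext_halves {x y : E 16} (hl : ∀ i : Fin 8, x (Fin.castAdd 8 i) = y (Fin.castAdd 8 i))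
    (hr : ∀ i : Fin 8, x (Fin.natAdd 8 i) = y (Fin.natAdd 8 i)) : x = y :=
  PiLp.ext fun i => Fin.addCases (m := 8) (n := 8) hl hr i

theorem halve_injective : Function.Injective halve := fun z w h => by
  refine Prod.ext (funext fun i => ?_) (funext fun i => ?_)
  · simpa using congrArg (fun x : E 16 => x (Fin.castAdd 8 i)) h
  · simpa [-Fin.natAdd_eq_addNat] using congrArg (fun x : E 16 => x (Fin.natAdd 8 i)) h

theorem sum_halves (f : Fin 16 → ℝ) :
    ∑ i, f i = ∑ i : Fin 8, f (Fin.castAdd 8 i) + ∑ i : Fin 8, f (Fin.natAdd 8 i) :=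
  Fin.sum_univ_add (a := 8) (b := 8) f

theorem norm_sq_eq_sum_halves (x : E 16) :
    ‖x‖ ^ 2 = ∑ i : Fin 8, x (Fin.castAdd 8 i) ^ 2 + ∑ i : Fin 8, x (Fin.natAdd 8 i) ^ 2 := by
  rw [EuclideanSpace.real_norm_sq_eq, sum_halves]

theorem inner_halve (z : DoubledVec) (x : E 16) :
    ⟪halve z, x⟫ =
      (∑ i, z.1 i * x (Fin.castAdd 8 i) + ∑ i, z.2 i * x (Fin.natAdd 8 i)) / 2 := by
  simp only [PiLp.inner_apply, sum_halves, halve_castAdd, halve_natAdd, RCLike.inner_apply,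
    conj_trivial, add_div, Finset.sum_div]
  congr 1 <;> exact Finset.sum_congr rfl fun i _ => by ring

/-- Four times the squared norm of `halve z`. -/
def sqNorm (z : DoubledVec) : ℤ := ∑ i, z.1 i ^ 2 + ∑ i, z.2 i ^ 2

theorem norm_halve_sq (z : DoubledVec) : ‖halve z‖ ^ 2 = sqNorm z / 4 := by
  simp only [norm_sq_eq_sum_halves, halve_castAdd, halve_natAdd, sqNorm, div_pow]
  push_cast
  rw [← Finset.sum_div, ← Finset.sum_div]
  ring

end Halving

section Shell

/-- The labels `(j, s, ε)` of the shell vectors with a half-integral left half. -/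
def shellIndex : Finset (Σ _ : Fin 8, (Fin 8 → ℤˣ) × ℤˣ) :=
  Finset.univ.sigma fun j => signClass j ×ˢ Finset.univ

/-- The vector `((s₀, …, s₇)/2, ε eⱼ)` in doubled coordinates. -/
def shellVec (t : Σ _ : Fin 8, (Fin 8 → ℤˣ) × ℤˣ) : DoubledVec :=
  (fun i => t.2.1 i, Pi.single t.1 (2 * t.2.2))

/-- The vectors of norm `3` of `O16`, in doubled coordinates. -/
def shell : Finset DoubledVec :=
  shellIndex.image shellVec ∪ shellIndex.image (Prod.swap ∘ shellVec)

theorem shellVec_injective : Function.Injective shellVec := by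
  rintro ⟨j, s, ε⟩ ⟨j', s', ε'⟩ h
  obtain ⟨hs, hj⟩ := Prod.mk.inj h
  obtain rfl : s = s' := funext fun i => Units.ext (congrFun hs i)
  obtain rfl : j = j' := by
    by_contra hne
    simpa [Pi.single_eq_of_ne hne] using congrFun hj j
  obtain rfl : ε = ε' := by simpa [Units.ext_iff] using congrFun hj j
  rfl

theorem shellVec_ne_swap (t t' : Σ _ : Fin 8, (Fin 8 → ℤˣ) × ℤˣ) :
    shellVec t ≠ (shellVec t').swap := fun h => by
  obtain ⟨i, hi⟩ := exists_ne t'.1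
  refine (t.2.1 i).ne_zero ?_
  simpa [shellVec, Pi.single_eq_of_ne hi] using congrFun (congrArg Prod.fst h) i

theorem disjoint_image_shellVec_swap :
    Disjoint (shellIndex.image shellVec) (shellIndex.image (Prod.swap ∘ shellVec)) := by
  simp only [Finset.disjoint_left, Finset.mem_image, not_exists, not_and]
  rintro _ ⟨t, _, rfl⟩ t' _ h
  exact shellVec_ne_swap t t' h.symm

theorem sum_shell (f : DoubledVec → ℝ) :
    ∑ z ∈ shell, f z =
      ∑ t ∈ shellIndex, f (shellVec t) + ∑ t ∈ shellIndex, f (shellVec t).swap := by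
  rw [shell, Finset.sum_union disjoint_image_shellVec_swap,
    Finset.sum_image shellVec_injective.injOn,
    Finset.sum_image (Prod.swap_injective.comp shellVec_injective).injOn]
  rfl

theorem card_shell : shell.card = 512 := by
  rw [shell, Finset.card_union_of_disjoint disjoint_image_shellVec_swap,
    Finset.card_image_of_injective _ shellVec_injective,
    Finset.card_image_of_injective _ (Prod.swap_injective.comp shellVec_injective)]
  simp [shellIndex, Finset.card_sigma, card_signClass]

-- Sum over `ε` first: only even powers of `ε` survive.
theorem sum_shellIndex_pow_four (a b : Fin 8 → ℝ) :
    ∑ t ∈ shellIndex, (signDot t.2.1 a / 2 + t.2.2 * b t.1) ^ 4 =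
      48 * (∑ i, a i ^ 2) ^ 2 - 32 * ∑ i, a i ^ 4 +
        48 * (∑ i, a i ^ 2) * ∑ i, b i ^ 2 + 32 * ∑ i, b i ^ 4 := by
  have hsign : ∀ x y : ℝ,
      ∑ ε : ℤˣ, (x / 2 + ε * y) ^ 4 = x ^ 4 / 8 + 3 * x ^ 2 * y ^ 2 + 2 * y ^ 4 := fun x y => by
    rw [UnitsInt.univ, Finset.sum_pair (by decide)]
    push_cast
    ring
  have hclass : ∀ j, ∑ s ∈ signClass j, signDot s a ^ 2 = 16 * ∑ i, a i ^ 2 := fun j => by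
    rw [sum_signDot_sq fun i i' => sum_signClass_mul_eq_zero j, card_signClass, Nat.cast_ofNat]
  have heven : ∑ s ∈ evenSigns, signDot s a ^ 4 =
      128 * (3 * (∑ i, a i ^ 2) ^ 2 - 2 * ∑ i, a i ^ 4) := by
    rw [sum_signDot_pow_four fun i j k l => sum_evenSigns_mul_eq_zero, card_evenSigns,
      Nat.cast_ofNat]
  calc ∑ t ∈ shellIndex, (signDot t.2.1 a / 2 + t.2.2 * b t.1) ^ 4
      = ∑ j, ∑ s ∈ signClass j,
          (signDot s a ^ 4 / 8 + 3 * signDot s a ^ 2 * b j ^ 2 + 2 * b j ^ 4) := by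
        simp only [shellIndex, Finset.sum_sigma, Finset.sum_product, hsign]
    _ = ∑ j, ((∑ s ∈ signClass j, signDot s a ^ 4) / 8 + 48 * (∑ i, a i ^ 2) * b j ^ 2 +
          32 * b j ^ 4) := by
        refine Finset.sum_congr rfl fun j _ => ?_
        rw [Finset.sum_add_distrib, Finset.sum_add_distrib, ← Finset.sum_div, ← Finset.sum_mul,
          ← Finset.mul_sum, hclass, Finset.sum_const, card_signClass, nsmul_eq_mul]
        ring
    _ = _ := by
        rw [Finset.sum_add_distrib, Finset.sum_add_distrib, ← Finset.sum_div, sum_signClass,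
          heven, ← Finset.mul_sum, ← Finset.mul_sum]
        ring

theorem inner_halve_shellVec (t : Σ _ : Fin 8, (Fin 8 → ℤˣ) × ℤˣ) (x : E 16) :
    ⟪halve (shellVec t), x⟫ =
      signDot t.2.1 (fun i => x (Fin.castAdd 8 i)) / 2 + t.2.2 * x (Fin.natAdd 8 t.1) := by
  simp only [inner_halve, shellVec, signDot, Pi.single_apply, Int.cast_ite, Int.cast_zero,
    ite_mul, zero_mul, Finset.sum_ite_eq', Finset.mem_univ, if_true, Int.cast_mul, Int.cast_ofNat]
  ring

theorem inner_halve_swap_shellVec (t : Σ _ : Fin 8, (Fin 8 → ℤˣ) × ℤˣ) (x : E 16) :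
    ⟪halve (shellVec t).swap, x⟫ =
      signDot t.2.1 (fun i => x (Fin.natAdd 8 i)) / 2 + t.2.2 * x (Fin.castAdd 8 t.1) := by
  simp only [inner_halve, shellVec, Prod.swap, signDot, Pi.single_apply, Int.cast_ite,
    Int.cast_zero, ite_mul, zero_mul, Finset.sum_ite_eq', Finset.mem_univ, if_true, Int.cast_mul,
    Int.cast_ofNat]
  ring

-- Each half of the shell is not a design, but exchanging the halves cancels the quartics `∑ xᵢ⁴`.
theorem sum_inner_halve_pow_four (x : E 16) :
    ∑ z ∈ shell, ⟪halve z, x⟫ ^ 4 = 48 * ‖x‖ ^ 4 := by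
  let a : Fin 8 → ℝ := fun i => x (Fin.castAdd 8 i)
  let b : Fin 8 → ℝ := fun i => x (Fin.natAdd 8 i)
  calc ∑ z ∈ shell, ⟪halve z, x⟫ ^ 4
      = ∑ t ∈ shellIndex, (signDot t.2.1 a / 2 + t.2.2 * b t.1) ^ 4 +
          ∑ t ∈ shellIndex, (signDot t.2.1 b / 2 + t.2.2 * a t.1) ^ 4 := by
        simp only [sum_shell, inner_halve_shellVec, inner_halve_swap_shellVec, a, b]
    _ = 48 * (‖x‖ ^ 2) ^ 2 := by
        rw [sum_shellIndex_pow_four, sum_shellIndex_pow_four, norm_sq_eq_sum_halves]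
        ring
    _ = 48 * ‖x‖ ^ 4 := by ring

end Shell

/-! ### The shell consists of the vectors of norm three -/

section Lattice

/-- The standard basis vector `ε i` in doubled coordinates. -/
def doubledBasis (i : Fin 16) : DoubledVec :=
  (fun j => if Fin.castAdd 8 j = i then 2 else 0, fun j => if Fin.natAdd 8 j = i then 2 else 0)

theorem halve_doubledBasis (i : Fin 16) : halve (doubledBasis i) = εv i := by
  refine ext_halves (fun j => ?_) fun j => ?_
  · simp [εv, doubledBasis, PiLp.single_apply, ite_div]
  · simp [εv, doubledBasis, PiLp.single_apply, ite_div, -Fin.natAdd_eq_addNat]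

/-- The generator `f0` in doubled coordinates. -/
def doubledF0 : DoubledVec := (![-1, 1, 1, 1, 1, 1, 1, 1], ![-1, 1, 1, 1, 1, 1, 1, 1])

/-- The generator `f1` in doubled coordinates. -/
def doubledF1 : DoubledVec := (![1, 1, 1, 1, 1, 1, 1, 1], ![2, 0, 0, 0, 0, 0, 0, 0])

theorem halve_doubledF0 : halve doubledF0 = f0 := by
  refine ext_halves (fun j => ?_) fun j => ?_
  · fin_cases j <;> norm_num [f0, vec, doubledF0, Fin.castAdd, Fin.castLE]
  · fin_cases j <;> norm_num [f0, vec, doubledF0, Fin.addNat]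

theorem halve_doubledF1 : halve doubledF1 = f1 := by
  refine ext_halves (fun j => ?_) fun j => ?_
  · fin_cases j <;> norm_num [f1, vec, doubledF1, Fin.castAdd, Fin.castLE]
  · fin_cases j <;> norm_num [f1, vec, doubledF1, Fin.addNat]

/-- The generators `g1, …, g11` in doubled coordinates. -/
def doubledG : Fin 11 → DoubledVec :=
  let e := doubledBasis
  ![e 0 + e 4 + e 8 + e 12, e 0 + e 2 + e 4 + e 6, e 0 + e 2 + e 8 + e 10, e 0 + e 2 + e 12 + e 14,
    e 0 + e 1 + e 2 + e 3, e 0 + e 1 + e 4 + e 5, e 0 + e 1 + e 6 + e 7, e 0 + e 1 + e 8 + e 9,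
    e 0 + e 1 + e 10 + e 11, e 0 + e 1 + e 12 + e 13, e 0 + e 1 + e 14 + e 15]

theorem halve_comp_doubledG :
    halve ∘ doubledG = ![g1, g2, g3, g4, g5, g6, g7, g8, g9, g10, g11] := by
  funext k
  fin_cases k <;>
    simp [doubledG, halve_doubledBasis, g1, g2, g3, g4, g5, g6, g7, g8, g9, g10, g11]

/-- The generators of `O16` in doubled coordinates. -/
def doubledGenerators : Set DoubledVec :=
  Set.range (fun i => (2 : ℤ) • doubledBasis i) ∪
    insert doubledF0 (Set.range doubledG) ∪ {doubledF1}

theorem O16_eq_map_span : O16 = (Submodule.span ℤ doubledGenerators).map halve := by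
  have hbasis : halve ∘ (fun i => (2 : ℤ) • doubledBasis i) = fun i => (2 : ℝ) • εv i :=
    funext fun i => by simp [halve_doubledBasis, two_smul]
  rw [Submodule.map_span, O16, BW16, ← Submodule.span_union, doubledGenerators, Set.image_union,
    Set.image_union, Set.image_insert_eq, ← Set.range_comp, ← Set.range_comp, Set.image_singleton,
    hbasis, halve_comp_doubledG, halve_doubledF0, halve_doubledF1]
  simp only [Matrix.range_cons, Matrix.range_empty, Set.union_empty, Set.insert_eq]

/-- Membership of `halve z` in `O16`, in terms of congruences. -/
def IsDoubledO16 (z : DoubledVec) : Prop :=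
  (∀ i, 2 ∣ z.1 i - z.1 0) ∧ (∀ i, 2 ∣ z.2 i - z.2 0) ∧
    4 ∣ ∑ i, z.1 i + 2 * z.2 0 ∧ 4 ∣ ∑ i, z.2 i + 2 * z.1 0 ∧
    ∀ k, 4 ∣ ∑ i with bitSign i k = -1, (z.1 i + z.2 i)

instance : DecidablePred IsDoubledO16 := fun z => by
  unfold IsDoubledO16
  infer_instance

theorem IsDoubledO16.add {z w : DoubledVec} (hz : IsDoubledO16 z) (hw : IsDoubledO16 w) :
    IsDoubledO16 (z + w) := by
  obtain ⟨zp, zp', zs, zs', zc⟩ := hz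
  obtain ⟨wp, wp', ws, ws', wc⟩ := hw
  simp only [IsDoubledO16, Prod.fst_add, Prod.snd_add, Pi.add_apply, add_sub_add_comm]
  refine ⟨fun i => dvd_add (zp i) (wp i), fun i => dvd_add (zp' i) (wp' i), ?_, ?_, fun k => ?_⟩
  · rw [Finset.sum_add_distrib, mul_add, add_add_add_comm]
    exact dvd_add zs ws
  · rw [Finset.sum_add_distrib, mul_add, add_add_add_comm]
    exact dvd_add zs' ws'
  · simpa only [Finset.sum_add_distrib, add_add_add_comm] using dvd_add (zc k) (wc k)

theorem IsDoubledO16.zsmul {z : DoubledVec} (hz : IsDoubledO16 z) (n : ℤ) :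
    IsDoubledO16 (n • z) := by
  obtain ⟨p, p', s, s', c⟩ := hz
  simp only [IsDoubledO16, Prod.smul_fst, Prod.smul_snd, Pi.smul_apply, smul_eq_mul,
    ← Finset.mul_sum, ← mul_sub, ← mul_add, mul_left_comm (2 : ℤ) n]
  exact ⟨fun i => (p i).mul_left n, fun i => (p' i).mul_left n, s.mul_left n, s'.mul_left n,
    fun k => (c k).mul_left n⟩

theorem IsDoubledO16.swap {z : DoubledVec} (hz : IsDoubledO16 z) : IsDoubledO16 z.swap := by
  obtain ⟨p, p', s, s', c⟩ := hz
  exact ⟨p', p, s', s, fun k => by simpa only [Prod.swap, add_comm] using c k⟩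

/-- The lattice `O16` in doubled coordinates. -/
def doubledO16 : Submodule ℤ DoubledVec where
  carrier := {z | IsDoubledO16 z}
  add_mem' := IsDoubledO16.add
  zero_mem' := by decide +kernel
  smul_mem' n _ hz := hz.zsmul n

theorem span_doubledGenerators_le : Submodule.span ℤ doubledGenerators ≤ doubledO16 := by
  have hbasis : ∀ i, IsDoubledO16 ((2 : ℤ) • doubledBasis i) := by decide +kernel
  have hG : ∀ k, IsDoubledO16 (doubledG k) := by decide +kernel
  have hF : IsDoubledO16 doubledF0 ∧ IsDoubledO16 doubledF1 := by decide +kernel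
  refine Submodule.span_le.mpr (Set.union_subset (Set.union_subset ?_ ?_) ?_)
  · exact Set.range_subset_iff.mpr hbasis
  · exact Set.insert_subset hF.1 (Set.range_subset_iff.mpr hG)
  · exact Set.singleton_subset_iff.mpr hF.2

theorem mem_span_of_four_dvd {z : DoubledVec} (hl : ∀ i, 4 ∣ z.1 i) (hr : ∀ i, 4 ∣ z.2 i) :
    z ∈ Submodule.span ℤ doubledGenerators := by
  choose a ha using hl
  choose b hb using hr
  have hz : z = ∑ i, Fin.append a b i • (2 : ℤ) • doubledBasis i := by
    refine Prod.ext (funext fun i => ?_) (funext fun i => ?_)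
    · simpa [doubledBasis, Prod.fst_sum, mul_comm] using ha i
    · simpa [doubledBasis, Prod.snd_sum, mul_comm, -Fin.natAdd_eq_addNat] using hb i
  rw [hz]
  exact Submodule.sum_mem _ fun i _ => Submodule.smul_mem _ _ <|
    Submodule.subset_span (.inl (.inl ⟨i, rfl⟩))

-- The positions `3, 5, 6, 7, 9, …, 15` are an information set of the binary code spanned by
-- `g1, …, g11`; the coefficients `c` are read off there.
theorem mem_span_of_two_dvd {z : DoubledVec} (hz : IsDoubledO16 z) (hl : ∀ i, 2 ∣ z.1 i)
    (hr : ∀ i, 2 ∣ z.2 i) : z ∈ Submodule.span ℤ doubledGenerators := by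
  choose a ha using hl
  choose b hb using hr
  obtain rfl : z = (fun i => 2 * a i, fun i => 2 * b i) := Prod.ext (funext ha) (funext hb)
  obtain ⟨-, -, hsum, hsum', hcheck⟩ := hz
  have hfilter : ∀ k, ({i | bitSign i k = -1} : Finset (Fin 8)) =
    ![{1, 3, 5, 7}, {2, 3, 6, 7}, {4, 5, 6, 7}] k := by decide
  have h0 := hcheck 0
  have h1 := hcheck 1
  have h2 := hcheck 2
  simp only [Fin.isValue, hfilter, Nat.succ_eq_add_one, Nat.reduceAdd, Matrix.cons_val_zero,
    Finset.mem_insert, Fin.reduceEq, Finset.mem_singleton, or_self, not_false_eq_true,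
    Finset.sum_insert, Finset.sum_singleton, Matrix.cons_val_one, Matrix.cons_val,
    Fin.sum_univ_eight] at h0 h1 h2 hsum hsum'
  let c : Fin 11 → ℤ := ![b 4 - b 5 - (b 6 - b 7), a 6 - a 7, b 2 - b 3, b 6 - b 7, a 3, a 5, a 7,
    b 1, b 3, b 5, b 7]
  have hc : ∑ k, c k • doubledG k ∈ Submodule.span ℤ doubledGenerators :=
    Submodule.sum_mem _ fun k _ => Submodule.smul_mem _ _ <|
      Submodule.subset_span (.inl (.inr (.inr ⟨k, rfl⟩)))
  rw [← sub_add_cancel (_, _) (∑ k, c k • doubledG k)]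
  refine Submodule.add_mem _ (mem_span_of_four_dvd (fun i => ?_) fun i => ?_) hc
  · fin_cases i <;> simp [c, Fin.sum_univ_succ, doubledG, doubledBasis] <;> omega
  · fin_cases i <;> simp [c, Fin.sum_univ_succ, doubledG, doubledBasis] <;> omega

theorem span_doubledGenerators : Submodule.span ℤ doubledGenerators = doubledO16 := by
  refine le_antisymm span_doubledGenerators_le fun z hz => ?_
  set y := z.2 0 • doubledF0 + (z.1 0 - z.2 0) • doubledF1 with hy_def
  have hF : doubledF0 ∈ Submodule.span ℤ doubledGenerators ∧
      doubledF1 ∈ Submodule.span ℤ doubledGenerators :=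
    ⟨Submodule.subset_span (.inl (.inr (.inl rfl))), Submodule.subset_span (.inr rfl)⟩
  have hy : y ∈ Submodule.span ℤ doubledGenerators :=
    Submodule.add_mem _ (Submodule.smul_mem _ _ hF.1) (Submodule.smul_mem _ _ hF.2)
  rw [← sub_add_cancel z y]
  refine Submodule.add_mem _ (mem_span_of_two_dvd
    (doubledO16.sub_mem hz (span_doubledGenerators_le hy)) (fun i => ?_) fun i => ?_) hy
  · have hi := hz.1 i
    fin_cases i <;> simp [hy_def, doubledF0, doubledF1] at hi ⊢ <;> omega
  · have hi := hz.2.1 i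
    fin_cases i <;> simp [hy_def, doubledF0, doubledF1] at hi ⊢ <;> omega

theorem mem_O16_iff {x : E 16} : x ∈ O16 ↔ ∃ z, IsDoubledO16 z ∧ halve z = x := by
  rw [O16_eq_map_span, span_doubledGenerators]
  exact Submodule.mem_map

end Lattice

section Classification

theorem prod_units_modEq {ι : Type*} (s : ι → ℤˣ) (t : Finset ι) :
    ((∏ i ∈ t, s i : ℤˣ) : ℤ) ≡ ∑ i ∈ t, (s i : ℤ) - t.card + 1 [ZMOD 4] := by
  classical
  have hmul : ∀ η η' : ℤˣ, ((η * η' : ℤˣ) : ℤ) ≡ η + η' - 1 [ZMOD 4] := by decide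
  induction t using Finset.induction_on with
  | empty => simp
  | insert a t ha ih =>
    rw [Finset.prod_insert ha, Finset.sum_insert ha, Finset.card_insert_of_notMem ha]
    refine (hmul _ _).trans ?_
    convert (ih.add_left (s a : ℤ)).sub_right 1 using 1
    push_cast
    ring

theorem four_dvd_sum_units_add_iff {ι : Type*} (s : ι → ℤˣ) {t : Finset ι} (ht : 4 ∣ t.card)
    (η : ℤˣ) : 4 ∣ ∑ i ∈ t, (s i : ℤ) + (1 - η) ↔ ∏ i ∈ t, s i = η := by
  have hunits : ∀ η η' : ℤˣ, (4 : ℤ) ∣ η' - η ↔ η' = η := by decide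
  rw [← hunits]
  refine dvd_iff_dvd_of_dvd_sub ?_
  have h := (prod_units_modEq s t).dvd
  lia

theorem isDoubledO16_shellVec_iff (j : Fin 8) (s : Fin 8 → ℤˣ) (ε : ℤˣ) :
    IsDoubledO16 (shellVec ⟨j, s, ε⟩) ↔ s ∈ signClass j := by
  have hcard : ∀ k, ({i | bitSign i k = -1} : Finset (Fin 8)).card = 4 := by decide
  have hunits : ∀ η η' : ℤˣ, (2 : ℤ) ∣ η - η' ∧ (4 : ℤ) ∣ 2 * η + 2 * η' := by decide
  let v : Fin 8 → ℤ := Pi.single j (2 * (ε : ℤ))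
  have hv : ∀ i, 2 ∣ v i := fun i => by
    by_cases hi : i = j <;> simp [v, hi]
  have hsum : 4 ∣ ∑ i, (s i : ℤ) + 2 * v 0 ↔ s ∈ evenSigns := by
    rw [dvd_add_left (show 4 ∣ 2 * v 0 from mul_dvd_mul_left 2 (hv 0)), evenSigns,
      Finset.mem_filter_univ, ← four_dvd_sum_units_add_iff s (by simp) 1]
    simp
  have hsum' : 4 ∣ ∑ i, v i + 2 * (s 0 : ℤ) := by
    rw [Finset.sum_pi_single', if_pos (Finset.mem_univ j)]
    exact (hunits ε (s 0)).2
  have hcheck : ∀ k, 4 ∣ ∑ i with bitSign i k = -1, ((s i : ℤ) + v i) ↔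
      checkSign s k = bitSign j k := fun k => by
    have hv_sum : (4 : ℤ) ∣ ∑ i with bitSign i k = -1, v i - (1 - bitSign j k) := by
      simp only [v, Finset.sum_pi_single', Finset.mem_filter_univ]
      rcases Int.units_eq_one_or (bitSign j k) with h | h
      · simp [h]
      · simpa [h, sub_eq_add_neg] using (hunits ε (-1)).2
    rw [checkSign, ← four_dvd_sum_units_add_iff s (hcard k).symm.dvd, Finset.sum_add_distrib]
    exact dvd_iff_dvd_of_dvd_sub (by rwa [add_sub_add_left_eq_sub])
  have hparity : (∀ i, (2 : ℤ) ∣ s i - s 0) ∧ ∀ i, 2 ∣ v i - v 0 :=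
    ⟨fun i => (hunits _ _).1, fun i => dvd_sub (hv i) (hv 0)⟩
  rw [signClass, Finset.mem_filter, funext_iff, ← hsum]
  simp only [← hcheck]
  exact ⟨fun h => ⟨h.2.2.1, h.2.2.2.2⟩, fun h => ⟨hparity.1, hparity.2, h.1, hsum', h.2⟩⟩

theorem eq_single_of_sum_sq_eq_one {ι : Type*} [Fintype ι] [DecidableEq ι] {b : ι → ℤ}
    (hb : ∑ i, b i ^ 2 = 1) : ∃ (j : ι) (ε : ℤˣ), b = Pi.single j (ε : ℤ) := by
  obtain ⟨j, hj⟩ : ∃ j, b j ≠ 0 := by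
    by_contra! h
    simp [h] at hb
  have hrest_nonneg : 0 ≤ ∑ i ∈ Finset.univ.erase j, b i ^ 2 :=
    Finset.sum_nonneg fun i _ => sq_nonneg (b i)
  have hsplit := Finset.add_sum_erase Finset.univ (fun i => b i ^ 2) (Finset.mem_univ j)
  have hpos : 0 < b j ^ 2 := by positivity
  have hunit : b j ^ 2 = 1 := by lia
  have hrest : ∀ i, i ≠ j → b i = 0 := fun i hi => by
    have h0 : ∑ i ∈ Finset.univ.erase j, b i ^ 2 = 0 := by lia
    exact pow_eq_zero_iff two_ne_zero |>.mp <|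
      (Finset.sum_eq_zero_iff_of_nonneg fun i _ => sq_nonneg (b i)).mp h0 i (by simp [hi])
  obtain ⟨ε, hε⟩ := IsUnit.of_pow_eq_one hunit two_ne_zero
  refine ⟨j, ε, funext fun i => ?_⟩
  rcases eq_or_ne i j with rfl | hi
  · simp [hε]
  · simp [hi, hrest i hi]

theorem two_dvd_sum_sq_iff {ι : Type*} [Fintype ι] (a : ι → ℤ) :
    2 ∣ ∑ i, a i ^ 2 ↔ 2 ∣ ∑ i, a i := by
  refine dvd_iff_dvd_of_dvd_sub ?_
  rw [← Finset.sum_sub_distrib]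
  refine Finset.dvd_sum fun i _ => ?_
  simpa only [sq, mul_sub, mul_one] using (Int.even_mul_pred_self (a i)).two_dvd

section Odd

variable {ι : Type*} [Fintype ι] {u : ι → ℤ}

theorem one_le_sq_of_odd {n : ℤ} (hn : Odd n) : 1 ≤ n ^ 2 :=
  Order.one_le_iff_pos.mpr (sq_pos_iff.mpr fun h => by simp [h] at hn)

theorem card_le_sum_sq_of_odd (hu : ∀ i, Odd (u i)) : (Fintype.card ι : ℤ) ≤ ∑ i, u i ^ 2 := by
  simpa using Finset.sum_le_sum fun i (_ : i ∈ Finset.univ) => one_le_sq_of_odd (hu i)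

theorem eight_dvd_sum_sq_sub_card_of_odd (hu : ∀ i, Odd (u i)) :
    (8 : ℤ) ∣ ∑ i, u i ^ 2 - Fintype.card ι := by
  simpa [Finset.sum_sub_distrib] using
    Finset.dvd_sum fun i (_ : i ∈ Finset.univ) => Int.eight_dvd_sq_sub_one_of_odd (hu i)

theorem eq_units_of_odd_of_sum_sq_eq_card (hu : ∀ i, Odd (u i))
    (hcard : ∑ i, u i ^ 2 = Fintype.card ι) : ∃ s : ι → ℤˣ, u = fun i => (s i : ℤ) := by
  have hsq : ∀ i, 1 = u i ^ 2 := fun i =>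
    (Finset.sum_eq_sum_iff_of_le fun i _ => one_le_sq_of_odd (hu i)).mp (by simp [hcard]) i
      (Finset.mem_univ i)
  choose s hs using fun i => IsUnit.of_pow_eq_one (hsq i).symm two_ne_zero
  exact ⟨s, funext fun i => (hs i).symm⟩

end Odd

theorem eight_dvd_sqNorm_of_even {z : DoubledVec} (hz : IsDoubledO16 z) (hl : ∀ i, 2 ∣ z.1 i)
    (hr : ∀ i, 2 ∣ z.2 i) : 8 ∣ sqNorm z := by
  choose a ha using hl
  choose b hb using hr
  obtain ⟨-, -, hsum, hsum', -⟩ := hz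
  simp only [ha, hb, ← Finset.mul_sum] at hsum hsum'
  have ha_even := (two_dvd_sum_sq_iff a).mpr (by lia)
  have hb_even := (two_dvd_sum_sq_iff b).mpr (by lia)
  simp only [sqNorm, ha, hb, mul_pow, ← Finset.mul_sum]
  lia

theorem mem_shellIndex {j : Fin 8} {s : Fin 8 → ℤˣ} {ε : ℤˣ} :
    ⟨j, s, ε⟩ ∈ shellIndex ↔ s ∈ signClass j := by
  simp only [shellIndex, Finset.mem_sigma, Finset.mem_product, Finset.mem_univ, true_and, and_true]

theorem exists_shellVec_eq {z : DoubledVec} (hz : IsDoubledO16 z) (hnorm : sqNorm z = 12)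
    (hl : ∀ i, Odd (z.1 i)) (hr : ∀ i, 2 ∣ z.2 i) : ∃ t ∈ shellIndex, shellVec t = z := by
  obtain ⟨u, v⟩ := z
  choose b hb using hr
  obtain rfl : v = fun i => 2 * b i := funext hb
  have hb_nonneg : 0 ≤ ∑ i, b i ^ 2 := Finset.sum_nonneg fun i _ => sq_nonneg (b i)
  have hu_dvd := eight_dvd_sum_sq_sub_card_of_odd hl
  have hu_le := card_le_sum_sq_of_odd hl
  simp only [sqNorm, mul_pow, ← Finset.mul_sum, Fintype.card_fin, Nat.cast_ofNat]
    at hnorm hu_dvd hu_le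
  obtain ⟨s, rfl⟩ := eq_units_of_odd_of_sum_sq_eq_card hl (by rw [Fintype.card_fin]; lia)
  obtain ⟨j, ε, rfl⟩ := eq_single_of_sum_sq_eq_one (b := b) (by lia)
  have hvec : shellVec ⟨j, s, ε⟩ =
      (fun i => (s i : ℤ), fun i => 2 * Pi.single (M := fun _ => ℤ) j (ε : ℤ) i) :=
    Prod.ext rfl (funext fun i => by simp only [shellVec, Pi.single_apply, mul_ite, mul_zero])
  rw [← hvec] at hz ⊢
  exact ⟨_, mem_shellIndex.mpr ((isDoubledO16_shellVec_iff j s ε).mp hz), rfl⟩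

theorem sqNorm_shellVec (t : Σ _ : Fin 8, (Fin 8 → ℤˣ) × ℤˣ) : sqNorm (shellVec t) = 12 := by
  have hunit : ∀ η : ℤˣ, (η : ℤ) ^ 2 = 1 := by decide
  simp [sqNorm, shellVec, Pi.single_apply, ite_pow, mul_pow, hunit]

theorem sqNorm_swap (z : DoubledVec) : sqNorm z.swap = sqNorm z := add_comm _ _

theorem mem_shell_swap {z : DoubledVec} : z.swap ∈ shell ↔ z ∈ shell := by
  simp only [shell, Finset.mem_union, Finset.mem_image, Function.comp_apply,
    Prod.swap_eq_iff_eq_swap, Prod.swap_swap]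
  exact or_comm

theorem mem_shell_of_isDoubledO16 {z : DoubledVec} (hz : IsDoubledO16 z)
    (hnorm : sqNorm z = 12) : z ∈ shell := by
  have hparity : ∀ {u : Fin 8 → ℤ}, (∀ i, 2 ∣ u i - u 0) → (∀ i, Odd (u i)) ∨ ∀ i, 2 ∣ u i :=
    fun {u} hu => (Int.even_or_odd (u 0)).symm.imp
      (fun h i => by simpa using h.add_even (even_iff_two_dvd.mpr (hu i)))
      fun h i => (dvd_iff_dvd_of_dvd_sub (hu i)).mpr h.two_dvd
  have hmem_of_odd_even : ∀ {w : DoubledVec}, IsDoubledO16 w → sqNorm w = 12 →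
      (∀ i, Odd (w.1 i)) → (∀ i, 2 ∣ w.2 i) → w ∈ shell := fun hw hw' hl hr =>
    Finset.mem_union_left _ (Finset.mem_image.mpr (exists_shellVec_eq hw hw' hl hr))
  rcases hparity hz.1 with hl | hl <;> rcases hparity hz.2.1 with hr | hr
  · have hle := add_le_add (card_le_sum_sq_of_odd hl) (card_le_sum_sq_of_odd hr)
    rw [sqNorm] at hnorm
    norm_num [hnorm] at hle
  · exact hmem_of_odd_even hz hnorm hl hr
  · exact mem_shell_swap.mp (hmem_of_odd_even hz.swap ((sqNorm_swap z).trans hnorm) hr hl)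
  · have hdvd := eight_dvd_sqNorm_of_even hz hl hr
    norm_num [hnorm] at hdvd

theorem mem_shell_iff {z : DoubledVec} : z ∈ shell ↔ IsDoubledO16 z ∧ sqNorm z = 12 := by
  refine ⟨fun hz => ?_, fun hz => mem_shell_of_isDoubledO16 hz.1 hz.2⟩
  have hvec : ∀ t ∈ shellIndex, IsDoubledO16 (shellVec t) := fun ⟨j, s, ε⟩ ht =>
    (isDoubledO16_shellVec_iff j s ε).mpr (mem_shellIndex.mp ht)
  rcases Finset.mem_union.mp hz with hz | hz
  · obtain ⟨t, ht, rfl⟩ := Finset.mem_image.mp hz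
    exact ⟨hvec t ht, sqNorm_shellVec t⟩
  · obtain ⟨t, ht, rfl⟩ := Finset.mem_image.mp hz
    exact ⟨(hvec t ht).swap, (sqNorm_swap _).trans (sqNorm_shellVec t)⟩

theorem neg_mem_shell {z : DoubledVec} (hz : z ∈ shell) : -z ∈ shell := by
  rw [mem_shell_iff] at hz ⊢
  exact ⟨doubledO16.neg_mem hz.1, by simpa [sqNorm] using hz.2⟩

theorem norm_halve_sq_of_mem_shell {z : DoubledVec} (hz : z ∈ shell) : ‖halve z‖ ^ 2 = 3 := by
  rw [norm_halve_sq, (mem_shell_iff.mp hz).2]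
  norm_num

theorem image_halve_shell : halve '' shell = {x ∈ (O16 : Set (E 16)) | ‖x‖ ^ 2 = 3} := by
  ext x
  constructor
  · rintro ⟨z, hz, rfl⟩
    exact ⟨mem_O16_iff.mpr ⟨z, (mem_shell_iff.mp hz).1, rfl⟩, norm_halve_sq_of_mem_shell hz⟩
  · rintro ⟨hx, hnorm⟩
    obtain ⟨z, hz, rfl⟩ := mem_O16_iff.mp hx
    refine ⟨z, mem_shell_iff.mpr ⟨hz, ?_⟩, rfl⟩
    rw [norm_halve_sq, div_eq_iff four_ne_zero] at hnorm
    exact_mod_cast (hnorm.trans (by norm_num) : (sqNorm z : ℝ) = 12)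

/-- The set `X19` as a finset. -/
def unitShell : Finset (E 16) := shell.image fun z => (√3)⁻¹ • halve z

theorem coe_unitShell : (unitShell : Set (E 16)) = X19 := by
  rw [X19, ← image_halve_shell, unitShell, Finset.coe_image, Set.image_image]

theorem normalize_halve_injective :
    Function.Injective fun z : DoubledVec => (√3)⁻¹ • halve z :=
  (smul_right_injective (E 16) (by positivity : (√3)⁻¹ ≠ 0)).comp halve_injective

theorem card_unitShell : unitShell.card = 512 := by
  rw [unitShell, Finset.card_image_of_injective _ normalize_halve_injective, card_shell]

theorem norm_eq_one_of_mem_unitShell {x : E 16} (hx : x ∈ unitShell) : ‖x‖ = 1 := by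
  obtain ⟨z, hz, rfl⟩ := Finset.mem_image.mp hx
  rw [norm_smul, ← sq_eq_sq₀ (by positivity) zero_le_one, mul_pow, norm_halve_sq_of_mem_shell hz]
  norm_num

theorem neg_mem_unitShell {x : E 16} (hx : x ∈ unitShell) : -x ∈ unitShell := by
  obtain ⟨z, hz, rfl⟩ := Finset.mem_image.mp hx
  exact Finset.mem_image.mpr ⟨-z, neg_mem_shell hz, by rw [map_neg, smul_neg]⟩

theorem sum_inner_unitShell_pow_four (v : E 16) :
    ∑ x ∈ unitShell, ⟪x, v⟫ ^ 4 = 16 / 3 * ‖v‖ ^ 4 := by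
  have hsqrt : (√3)⁻¹ ^ 4 = (1 / 9 : ℝ) := by
    rw [inv_pow, show √3 ^ 4 = (√3 ^ 2) ^ 2 by ring, Real.sq_sqrt (by norm_num)]
    norm_num
  rw [unitShell, Finset.sum_image normalize_halve_injective.injOn]
  simp only [real_inner_smul_left, mul_pow, ← Finset.mul_sum, sum_inner_halve_pow_four, hsqrt]
  ring

end Classification

/-- The normalized norm-3 shell of `O₁₆` lies on the unit sphere, has exactly 512
elements, and is a spherical 5-design (so `O₁₆` is strongly perfect of minimum 3). -/
theorem O16_norm_three_shell_design :
    X19 ⊆ Metric.sphere (0 : E 16) 1 ∧ X19.Finite ∧ X19.ncard = 512 ∧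
    IsSphericalDesign X19 5 := by
  rw [← coe_unitShell, Set.ncard_coe_finset]
  refine ⟨fun x hx => mem_sphere_zero_iff_norm.mpr (norm_eq_one_of_mem_unitShell hx),
    unitShell.finite_toSet, card_unitShell, ?_⟩
  exact isSphericalDesign_of_sum_inner_pow (s := 2)
    (Finset.card_pos.mp (by simp only [card_unitShell, Nat.ofNat_pos]))
    (fun x => norm_eq_one_of_mem_unitShell) (fun x => neg_mem_unitShell)
    sum_inner_unitShell_pow_four
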